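/- Let r ≥ 3 be an integer and let Q^r ⊂ ℝ² be the convex hull of the points P^r_0 = (0, r(r−1)²/8) and P^r_l = ( (1/3)·∑_{i=1}^{l} C(r_i^{(l)}, 2), (1/4)·∑_{i=1}^{l} r_i^{(l)}·C(r_i^{(l)} − 1, 2) ) for l = 1, …, r, where r_i^{(l)} = ⌊(r+i−1)/l⌋. Then for every point (x, y) ∈ Q^r with both coordinates rational, there exists a nonempty finite simple r-regular graph G with d₃(G) = x and d₄(G) = y. -/

import Mathlib

open SimpleGraph

/-- The number of `k`-cycle subgraphs of `G`: each `k`-cycle subgraph corresponds to exactly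
`2 * k` rooted closed walks that are cycles of length `k`. -/
noncomputable def cycleCount {V : Type*} (G : SimpleGraph V) (k : ℕ) : ℕ :=
  Nat.card ((x : V) × {p : G.Walk x x // p.IsCycle ∧ p.length = k}) / (2 * k)

/-- The density of `k`-cycles: the number of `k`-cycles divided by the number of vertices. -/
noncomputable def cycleDensity {V : Type*} (G : SimpleGraph V) (k : ℕ) : ℝ :=
  (cycleCount G k : ℝ) / (Nat.card V : ℝ)

/-- A graph is `r`-regular if every vertex has exactly `r` neighbors. -/
def IsRegularGraph {V : Type*} (G : SimpleGraph V) (r : ℕ) : Prop :=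
  ∀ v : V, Nat.card (G.neighborSet v) = r

/-- The point `P^r_l` for `1 ≤ l ≤ r`, built from the balanced partition
`r_i = ⌊(r + i - 1) / l⌋`, `i = 1, …, l` (here `i` runs over `0, …, l-1`, so `r_i = (r+i)/l`). -/
noncomputable def extremePoint (r l : ℕ) : ℝ × ℝ :=
  ((1 / 3 : ℝ) * ∑ i ∈ Finset.range l, (((r + i) / l).choose 2 : ℝ),
   (1 / 4 : ℝ) * ∑ i ∈ Finset.range l, (((r + i) / l * (((r + i) / l - 1).choose 2) : ℕ) : ℝ))

/-- The vertex set of the polygon `Q^r`: the point `P^r_0 = (0, r(r-1)²/8)` together with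
the points `P^r_l`, `l = 1, …, r`. -/
noncomputable def extremeSet (r : ℕ) : Set (ℝ × ℝ) :=
  insert ((0 : ℝ), (r : ℝ) * ((r : ℝ) - 1) ^ 2 / 8)
    {p : ℝ × ℝ | ∃ l : ℕ, 1 ≤ l ∧ l ≤ r ∧ p = extremePoint r l}

/-- Pairs `(b, c)` such that `v, b, c` is a closed triangle rooted at `v`. -/
def rootedTriangles {V : Type*} (G : SimpleGraph V) (v : V) : Set (V × V) :=
  {p | G.Adj v p.1 ∧ G.Adj p.1 p.2 ∧ G.Adj p.2 v}

/-- Triples `(b, c, d)` such that `v, b, c, d` is a closed quadrilateral rooted at `v`. -/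
def rootedQuads {V : Type*} (G : SimpleGraph V) (v : V) : Set (V × V × V) :=
  {p | G.Adj v p.1 ∧ G.Adj p.1 p.2.1 ∧ G.Adj p.2.1 p.2.2 ∧ G.Adj p.2.2 v ∧
    v ≠ p.2.1 ∧ p.1 ≠ p.2.2}

/-- The closed walks at `v` that are cycles of length 3, listed by their vertices. -/
noncomputable def rootedTrianglesEquiv {V : Type*} (G : SimpleGraph V) (v : V) :
    rootedTriangles G v ≃ {p : G.Walk v v // p.IsCycle ∧ p.length = 3} := by
  refine Equiv.ofBijective
    (fun q : rootedTriangles G v =>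
      (⟨.cons q.2.1 (.cons q.2.2.1 (.cons q.2.2.2 .nil)), ?_⟩ :
        {p : G.Walk v v // p.IsCycle ∧ p.length = 3})) ⟨?_, ?_⟩
  · obtain ⟨⟨b, c⟩, h1, h2, h3⟩ := q
    have := h1.ne
    have := h2.ne
    have := h3.ne
    simp_all [SimpleGraph.Walk.cons_isCycle_iff, SimpleGraph.Walk.cons_isPath_iff]
    grind
  · rintro ⟨⟨b, c⟩, h1, h2, h3⟩ ⟨⟨b', c'⟩, h1', h2', h3'⟩ h
    have := congrArg (fun p => p.1.support) h
    simp_all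
  · rintro ⟨p, hp, hl⟩
    match p, hp, hl with
    | .cons h1 (.cons h2 (.cons h3 .nil)), hp, hl => exact ⟨⟨(_, _), h1, h2, h3⟩, rfl⟩

/-- The closed walks at `v` that are cycles of length 4, listed by their vertices. -/
noncomputable def rootedQuadsEquiv {V : Type*} (G : SimpleGraph V) (v : V) :
    rootedQuads G v ≃ {p : G.Walk v v // p.IsCycle ∧ p.length = 4} := by
  refine Equiv.ofBijective
    (fun q : rootedQuads G v =>
      (⟨.cons q.2.1 (.cons q.2.2.1 (.cons q.2.2.2.1 (.cons q.2.2.2.2.1 .nil))), ?_⟩ :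
        {p : G.Walk v v // p.IsCycle ∧ p.length = 4})) ⟨?_, ?_⟩
  · obtain ⟨⟨b, c, d⟩, h1, h2, h3, h4, h5, h6⟩ := q
    have := h1.ne
    have := h2.ne
    have := h3.ne
    have := h4.ne
    simp_all [SimpleGraph.Walk.cons_isCycle_iff, SimpleGraph.Walk.cons_isPath_iff]
    grind
  · rintro ⟨⟨b, c, d⟩, h1, h2, h3, h4, h5, h6⟩ ⟨⟨b', c', d'⟩, h1', h2', h3', h4', h5', h6'⟩ h
    have := congrArg (fun p => p.1.support) h
    simp_all
  · rintro ⟨p, hp, hl⟩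
    match p, hp, hl with
    | .cons (v := b) h1 (.cons (v := c) h2 (.cons (v := d) h3 (.cons h4 .nil))), hp, hl =>
      have h := hp.support_nodup
      simp at h
      refine ⟨⟨(b, c, d), h1, h2, h3, h4, ?_, ?_⟩, rfl⟩ <;> grind

/-- An `r`-regular graph in which every vertex is the root of exactly `s` rooted triangles and
`t` rooted quadrilaterals. -/
structure HasLocalCounts {V : Type*} (G : SimpleGraph V) (r s t : ℕ) : Prop where
  regular : IsRegularGraph G r
  triangles : ∀ v, Nat.card (rootedTriangles G v) = s
  quads : ∀ v, Nat.card (rootedQuads G v) = t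

/-- The disjoint union of a family of graphs. -/
def sigmaGraph {ι : Type*} {V : ι → Type*} (G : ∀ i, SimpleGraph (V i)) :
    SimpleGraph (Σ i, V i) where
  Adj x y := ∃ i a b, x = ⟨i, a⟩ ∧ y = ⟨i, b⟩ ∧ (G i).Adj a b
  symm := ⟨by
    rintro _ _ ⟨i, a, b, rfl, rfl, h⟩
    exact ⟨i, b, a, rfl, rfl, h.symm⟩⟩
  loopless := ⟨by
    rintro _ ⟨i, a, b, rfl, hb, h⟩
    obtain rfl : a = b := by simpa using hb
    exact h.ne rfl⟩

section sigmaGraph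

variable {ι : Type*} {V : ι → Type*} (G : ∀ i, SimpleGraph (V i)) (i : ι) (v : V i)

theorem sigmaGraph_adj_mk (w : V i) :
    (sigmaGraph G).Adj ⟨i, v⟩ ⟨i, w⟩ ↔ (G i).Adj v w := by
  constructor
  · rintro ⟨j, a, b, ha, hb, h⟩
    cases ha
    cases hb
    exact h
  · exact fun h => ⟨i, v, w, rfl, rfl, h⟩

theorem sigmaGraph_adj_left {y : Σ i, V i} (h : (sigmaGraph G).Adj ⟨i, v⟩ y) :
    ∃ w, y = ⟨i, w⟩ := by
  obtain ⟨j, a, b, ha, rfl, h⟩ := h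
  cases ha
  exact ⟨b, rfl⟩

theorem card_neighborSet_sigmaGraph :
    Nat.card ((sigmaGraph G).neighborSet ⟨i, v⟩) = Nat.card ((G i).neighborSet v) := by
  symm
  refine Nat.card_eq_of_bijective
    (fun w => ⟨⟨i, w.1⟩, (sigmaGraph_adj_mk G i v w.1).2 w.2⟩) ⟨?_, ?_⟩
  · intro a b h
    simpa [Subtype.ext_iff] using h
  · rintro ⟨y, hy⟩
    obtain ⟨w, rfl⟩ := sigmaGraph_adj_left G i v hy
    exact ⟨⟨w, (sigmaGraph_adj_mk G i v w).1 hy⟩, rfl⟩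

theorem card_rootedTriangles_sigmaGraph :
    Nat.card (rootedTriangles (sigmaGraph G) ⟨i, v⟩) = Nat.card (rootedTriangles (G i) v) := by
  symm
  refine Nat.card_eq_of_bijective
    (fun w => ⟨(⟨i, w.1.1⟩, ⟨i, w.1.2⟩), ?_⟩) ⟨?_, ?_⟩
  · simpa [rootedTriangles, sigmaGraph_adj_mk] using w.2
  · rintro ⟨⟨a, b⟩, _⟩ ⟨⟨a', b'⟩, _⟩ h
    simpa using h
  · rintro ⟨⟨y, z⟩, h⟩
    obtain ⟨y, rfl⟩ := sigmaGraph_adj_left G i v h.1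
    obtain ⟨z, rfl⟩ := sigmaGraph_adj_left G i v h.2.2.symm
    exact ⟨⟨(y, z), by simpa [rootedTriangles, sigmaGraph_adj_mk] using h⟩, rfl⟩

theorem card_rootedQuads_sigmaGraph :
    Nat.card (rootedQuads (sigmaGraph G) ⟨i, v⟩) = Nat.card (rootedQuads (G i) v) := by
  symm
  refine Nat.card_eq_of_bijective
    (fun w => ⟨(⟨i, w.1.1⟩, ⟨i, w.1.2.1⟩, ⟨i, w.1.2.2⟩), ?_⟩) ⟨?_, ?_⟩
  · simpa [rootedQuads, sigmaGraph_adj_mk] using w.2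
  · rintro ⟨⟨a, b, c⟩, _⟩ ⟨⟨a', b', c'⟩, _⟩ h
    simpa using h
  · rintro ⟨⟨x, y, z⟩, h⟩
    obtain ⟨x, rfl⟩ := sigmaGraph_adj_left G i v h.1
    obtain ⟨y, rfl⟩ := sigmaGraph_adj_left G i x h.2.1
    obtain ⟨z, rfl⟩ := sigmaGraph_adj_left G i y h.2.2.1
    exact ⟨⟨(x, y, z), by simpa [rootedQuads, sigmaGraph_adj_mk] using h⟩, rfl⟩

end sigmaGraph

theorem exists_rat_weights {ι : Type*} [Fintype ι] {z : ι → ℝ × ℝ} {w : ι → ℝ}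
    (hz : AffineIndependent ℝ z) (hw : ∑ i, w i = 1) (s t : ι → ℚ)
    (hst : ∀ i, z i = ((s i : ℝ), (t i : ℝ))) (x y : ℚ)
    (hxy : ∑ i, w i • z i = ((x : ℝ), (y : ℝ))) : ∃ q : ι → ℚ, ∀ i, w i = q i := by
  obtain ⟨φ, hφ⟩ := (Algebra.linearMap ℚ ℝ).exists_leftInverse_of_injective
    (LinearMap.ker_eq_bot.2 (algebraMap ℚ ℝ).injective)
  have hφ' (q : ℚ) : φ (q : ℝ) = q := by simpa using LinearMap.congr_fun hφ q
  have hmul (a : ℝ) (q : ℚ) : φ (a * q) = φ a * q := by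
    have : a * q = q • a := by rw [Rat.smul_def, mul_comm]
    rw [this, map_smul, smul_eq_mul, mul_comm]
  refine ⟨fun i => φ (w i), fun i => ?_⟩
  have h1 : ∑ i, (φ (w i) : ℝ) = 1 := by
    have := congrArg φ hw
    rw [map_sum] at this
    have h := hφ' 1
    push_cast at h
    rw [h] at this
    exact_mod_cast this
  have hx : ∑ i, w i * (s i : ℝ) = x := by
    simpa [hst, Prod.fst_sum] using congrArg Prod.fst hxy
  have hy : ∑ i, w i * (t i : ℝ) = y := by
    simpa [hst, Prod.snd_sum] using congrArg Prod.snd hxy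
  have hx' : ∑ i, (φ (w i) : ℝ) * (s i : ℝ) = x := by
    have := congrArg φ hx
    simp only [map_sum, hmul, hφ'] at this
    exact_mod_cast this
  have hy' : ∑ i, (φ (w i) : ℝ) * (t i : ℝ) = y := by
    have := congrArg φ hy
    simp only [map_sum, hmul, hφ'] at this
    exact_mod_cast this
  have := (affineIndependent_iff.1 hz) Finset.univ (fun i => w i - φ (w i))
    (by simp [hw, h1])
    (by
      ext
      · simp [hst, Prod.fst_sum, sub_mul, hx, hx']
      · simp [hst, Prod.snd_sum, sub_mul, hy, hy']) i (Finset.mem_univ i)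
  linarith

theorem exists_regular_graph_of_rat_weights {ι : Type} [Fintype ι] {V : ι → Type}
    [∀ i, Finite (V i)] [∀ i, Nonempty (V i)] (G : ∀ i, SimpleGraph (V i)) (r : ℕ) (s t : ι → ℕ)
    (hG : ∀ i, HasLocalCounts (G i) r (s i) (t i)) (q : ι → ℚ) (hq : ∀ i, 0 ≤ q i)
    (hq1 : ∑ i, q i = 1) :
    ∃ (W : Type) (H : SimpleGraph W), Finite W ∧ Nonempty W ∧ IsRegularGraph H r ∧
      cycleDensity H 3 = ∑ i, (q i : ℝ) * ((s i : ℝ) / 6) ∧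
      cycleDensity H 4 = ∑ i, (q i : ℝ) * ((t i : ℝ) / 8) := by
  classical
  have := fun i => Fintype.ofFinite (V i)
  set u : ι → ℚ := fun i => q i / Fintype.card (V i) with hu
  set D : ℕ := ∏ i, (u i).den with hD
  have hDpos : 0 < D := Finset.prod_pos fun i _ => (u i).den_pos
  have hm : ∀ i, ∃ m : ℕ, (m : ℚ) * Fintype.card (V i) = D * q i := by
    intro i
    obtain ⟨e, he⟩ : (u i).den ∣ D := Finset.dvd_prod_of_mem _ (Finset.mem_univ i)
    have hu0 : 0 ≤ u i := div_nonneg (hq i) (Nat.cast_nonneg _)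
    refine ⟨e * (u i).num.toNat, ?_⟩
    have h1 : (((u i).num.toNat : ℕ) : ℚ) = (u i).num := by
      exact_mod_cast Int.toNat_of_nonneg (Rat.num_nonneg.2 hu0)
    have h2 : ((u i).num : ℚ) = u i * (u i).den := (Rat.mul_den_eq_num _).symm
    have h3 : (Fintype.card (V i) : ℚ) ≠ 0 := by simp
    have h4 : u i * Fintype.card (V i) = q i := by
      rw [hu]; field_simp
    rw [he]
    push_cast
    rw [h1, h2, ← h4]
    ring
  choose m hm using hm
  let H := sigmaGraph (fun j : (Σ i, Fin (24 * m i)) => G j.1)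
  have hsum : ∀ f : ι → ℕ, ((∑ x : (Σ j : (Σ i, Fin (24 * m i)), V j.1), f x.1.1 : ℕ) : ℝ)
      = 24 * D * ∑ i, (q i : ℝ) * f i := by
    intro f
    rw [Fintype.sum_sigma, Fintype.sum_sigma]
    push_cast
    rw [Finset.mul_sum]
    refine Finset.sum_congr rfl fun i _ => ?_
    have := hm i
    have : (m i : ℝ) * Fintype.card (V i) = D * q i := by exact_mod_cast this
    change ∑ _ : Fin (24 * m i), ∑ _ : V i, (f i : ℝ) = _
    simp only [Finset.sum_const, Finset.card_univ, Fintype.card_fin, nsmul_eq_mul]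
    push_cast
    linear_combination 24 * (f i : ℝ) * this
  have hdvd : ∀ f : ι → ℕ, 24 ∣ ∑ x : (Σ j : (Σ i, Fin (24 * m i)), V j.1), f x.1.1 := by
    intro f
    rw [Fintype.sum_sigma, Fintype.sum_sigma]
    refine Finset.dvd_sum fun i _ => ?_
    change 24 ∣ ∑ _ : Fin (24 * m i), ∑ _ : V i, f i
    simp [mul_assoc]
  have hcard : (Nat.card (Σ j : (Σ i, Fin (24 * m i)), V j.1) : ℝ) = 24 * D := by
    have := hsum fun _ => 1
    have hq1' : ∑ i, (q i : ℝ) = 1 := by exact_mod_cast hq1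
    rw [Nat.card_eq_fintype_card]
    simpa [hq1', -Fintype.card_sigma] using this
  have hDR : (0 : ℝ) < D := by exact_mod_cast hDpos
  refine ⟨_, H, inferInstance, ?_, ?_, ?_, ?_⟩
  · have : Nat.card (Σ j : (Σ i, Fin (24 * m i)), V j.1) ≠ 0 := by
      intro h
      rw [h] at hcard
      simp at hcard
      linarith
    exact (Nat.card_ne_zero.1 this).1
  · rintro ⟨j, v⟩
    rw [card_neighborSet_sigmaGraph]
    exact (hG j.1).regular v
  · have h : Nat.card ((x : _) × {p : H.Walk x x // p.IsCycle ∧ p.length = 3}) =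
        ∑ x : (Σ j : (Σ i, Fin (24 * m i)), V j.1), s x.1.1 := by
      have hx x : Nat.card (rootedTriangles H x) = s x.1.1 := by
        rw [card_rootedTriangles_sigmaGraph]
        exact (hG _).triangles _
      rw [← Nat.card_congr (Equiv.sigmaCongrRight (rootedTrianglesEquiv H)), Nat.card_sigma]
      exact Finset.sum_congr rfl fun x _ => hx x
    rw [cycleDensity, cycleCount, h, Nat.cast_div ((by norm_num : 2 * 3 ∣ 24).trans (hdvd s))
      (by norm_num), hsum, hcard]
    simp only [← mul_div_assoc, ← Finset.sum_div]
    field_simp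
    norm_num
  · have h : Nat.card ((x : _) × {p : H.Walk x x // p.IsCycle ∧ p.length = 4}) =
        ∑ x : (Σ j : (Σ i, Fin (24 * m i)), V j.1), t x.1.1 := by
      have hx x : Nat.card (rootedQuads H x) = t x.1.1 := by
        rw [card_rootedQuads_sigmaGraph]
        exact (hG _).quads _
      rw [← Nat.card_congr (Equiv.sigmaCongrRight (rootedQuadsEquiv H)), Nat.card_sigma]
      exact Finset.sum_congr rfl fun x _ => hx x
    rw [cycleDensity, cycleCount, h, Nat.cast_div ((by norm_num : 2 * 4 ∣ 24).trans (hdvd t))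
      (by norm_num), hsum, hcard]
    simp only [← mul_div_assoc, ← Finset.sum_div]
    field_simp
    norm_num

/-- A vertex of the block graph: a point of the grid `∏ i, α i` together with a label. -/
abbrev BlockVertex {ι : Type} (α : ι → Type) : Type :=
  (∀ i, α i) × (ι × (∀ i, α i) → ZMod 2)

section blockGraph

theorem add_self_eq_zero_of_zmod_two {κ : Type*} (f : κ → ZMod 2) : f + f = 0 :=
  funext fun _ => CharTwo.add_self_eq_zero _

open Classical in
/-- Replace the `i`-th coordinate of `v` by `x`, shifting the label by the difference of the
basis vectors attached to `i` and to the two endpoints. -/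
noncomputable def blockMove {ι : Type} {α : ι → Type} (i : ι) (v : BlockVertex α) (x : α i) :
    BlockVertex α :=
  (Function.update v.1 i x,
    v.2 + Pi.single (i, v.1) 1 + Pi.single (i, Function.update v.1 i x) 1)

variable {ι : Type} {α : ι → Type} {i j : ι} (v : BlockVertex α)

theorem blockMove_fst_self (x : α i) : (blockMove i v x).1 i = x := by
  simp [blockMove]

theorem blockMove_fst_of_ne (x : α i) (h : j ≠ i) : (blockMove i v x).1 j = v.1 j := by
  simp [blockMove, h]

theorem blockMove_self : blockMove i v (v.1 i) = v := by
  ext1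
  · simp [blockMove]
  · simp [blockMove, add_assoc, add_self_eq_zero_of_zmod_two]

theorem blockMove_blockMove (x y : α i) :
    blockMove i (blockMove i v x) y = blockMove i v y := by
  ext1
  · simp [blockMove]
  · simp only [blockMove, Function.update_idem]
    rw [add_assoc (v.2 + _), add_self_eq_zero_of_zmod_two, add_zero]

theorem blockMove_inj {x y : α i} : blockMove i v x = blockMove i v y ↔ x = y := by
  refine ⟨fun h => ?_, fun h => h ▸ rfl⟩
  rw [← blockMove_fst_self v x, h, blockMove_fst_self]

theorem blockMove_eq_self {x : α i} : blockMove i v x = v ↔ x = v.1 i := by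
  conv_lhs => rhs; rw [← blockMove_self (i := i) v]
  exact blockMove_inj v

theorem eq_of_blockMove_eq {x : α i} {y : α j} (h : blockMove i v x = blockMove j v y)
    (hx : x ≠ v.1 i) : i = j := by
  by_contra hij
  apply hx
  rw [← blockMove_fst_self v x, h, blockMove_fst_of_ne v y hij]

variable (α) in
/-- The graph in which `v` is joined to all its moves: the moves in a fixed direction `i`
form a clique, and every cycle of length at most four lies in one such clique. -/
def blockGraph : SimpleGraph (BlockVertex α) where
  Adj v w := ∃ i, ∃ x : α i, x ≠ v.1 i ∧ w = blockMove i v x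
  symm := ⟨by
    rintro v _ ⟨i, x, hx, rfl⟩
    refine ⟨i, v.1 i, ?_, ?_⟩
    · rw [blockMove_fst_self]
      exact hx.symm
    · rw [blockMove_blockMove, blockMove_self]⟩
  loopless := ⟨by
    rintro v ⟨i, x, hx, h⟩
    exact hx ((blockMove_eq_self v).1 h.symm)⟩

theorem blockGraph_adj_blockMove {x : α i} (hx : x ≠ v.1 i) :
    (blockGraph α).Adj v (blockMove i v x) := ⟨i, x, hx, rfl⟩

theorem blockGraph_adj_blockMove_blockMove {x y : α i} (hxy : x ≠ y) :
    (blockGraph α).Adj (blockMove i v x) (blockMove i v y) :=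
  ⟨i, y, by rw [blockMove_fst_self]; exact hxy.symm, (blockMove_blockMove v x y).symm⟩

variable {v}

theorem eq_blockMove_of_mem_rootedTriangles {b c : BlockVertex α}
    (h : (b, c) ∈ rootedTriangles (blockGraph α) v) :
    ∃ i, ∃ x y : α i, x ≠ v.1 i ∧ y ≠ v.1 i ∧ x ≠ y ∧ b = blockMove i v x ∧
      c = blockMove i v y := by
  obtain ⟨⟨i, x, hx, hb⟩, ⟨j, y, hy, hc⟩, hcv⟩ := h
  have hne := hcv.ne
  obtain ⟨k, z, hz, hv⟩ := hcv
  dsimp only at *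
  by_cases hij : j = i
  · subst hij
    subst hb
    rw [blockMove_blockMove] at hc
    rw [blockMove_fst_self] at hy
    subst hc
    exact ⟨j, x, y, hx, fun h => hne ((blockMove_eq_self v).2 h), hy.symm, rfl, rfl⟩
  · exfalso
    have hci : c.1 i = x := by
      rw [hc, blockMove_fst_of_ne b y (Ne.symm hij), hb, blockMove_fst_self]
    have hcj : c.1 j = y := by rw [hc, blockMove_fst_self]
    have hbj : b.1 j = v.1 j := by rw [hb, blockMove_fst_of_ne v x hij]
    have hki : i = k := by
      by_contra hik
      exact hx (by rw [← hci, hv, blockMove_fst_of_ne c z hik])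
    subst hki
    exact hy (by rw [← hcj, hbj, hv, blockMove_fst_of_ne c z hij])

theorem blockMove_square_ne (hij : i ≠ j) {x z : α i} {y w : α j} (hx : x ≠ v.1 i)
    (hy : y ≠ v.1 j) :
    blockMove j (blockMove i (blockMove j (blockMove i v x) y) z) w ≠ v := by
  classical
  intro h
  have hz : z = v.1 i := by
    have := congrFun (congrArg Prod.fst h) i
    rwa [blockMove_fst_of_ne _ _ hij, blockMove_fst_self] at this
  have hw : w = v.1 j := by
    have := congrFun (congrArg Prod.fst h) j
    rwa [blockMove_fst_self] at this
  set p := Function.update v.1 i x with hp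
  have hpi : p i = x := by simp [hp]
  have hpj : p j = v.1 j := by simp [hp, hij.symm]
  have h0 : (i, p) ≠ (i, v.1) := by
    intro h; apply hx; rw [← hpi, (Prod.mk.inj h).2]
  have h2 : (i, p) ≠ (i, Function.update p j y) := by
    intro h
    apply hy
    have := congrFun (Prod.mk.inj h).2 j
    rw [Function.update_self, hpj] at this
    exact this.symm
  have h3 : (i, p) ≠ (i, Function.update (Function.update p j y) i z) := by
    intro h
    apply hx
    have := congrFun (Prod.mk.inj h).2 i
    rw [Function.update_self, hpi] at this
    rw [this, hz]
  have hne : ∀ a, (i, p) ≠ (j, a) := fun a h => hij (Prod.mk.inj h).1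
  have := congrFun (congrArg Prod.snd h) (i, p)
  simp only [blockMove, ← hp, Pi.add_apply, Pi.single_eq_same, Pi.single_eq_of_ne h0,
    Pi.single_eq_of_ne h2, Pi.single_eq_of_ne h3, Pi.single_eq_of_ne (hne _), add_zero] at this
  simp at this

theorem eq_blockMove_of_mem_rootedQuads {b c d : BlockVertex α}
    (h : (b, c, d) ∈ rootedQuads (blockGraph α) v) :
    ∃ i, ∃ x y z : α i, x ≠ v.1 i ∧ y ≠ v.1 i ∧ z ≠ v.1 i ∧ x ≠ y ∧ x ≠ z ∧ y ≠ z ∧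
      b = blockMove i v x ∧ c = blockMove i v y ∧ d = blockMove i v z := by
  obtain ⟨hvb, hbc, hcd, hdv, hvc, hbd⟩ := h
  dsimp only at *
  obtain ⟨i, x, hx, hb⟩ := id hvb
  obtain ⟨j, y, hy, hc⟩ := id hbc
  obtain ⟨k, z, hz, hd⟩ := id hcd
  obtain ⟨m, w, hw, hv⟩ := id hdv
  by_cases hij : j = i
  · subst hij
    rw [hb, blockMove_blockMove] at hc
    have hy : y ≠ v.1 j := fun h => hvc (by rw [hc, (blockMove_eq_self v).2 h])
    obtain ⟨i', y', z', hy', hz', hyz', hc', hd'⟩ :=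
      eq_blockMove_of_mem_rootedTriangles (b := c) (c := d) ⟨⟨j, y, hy, hc⟩, hcd, hdv⟩
    obtain rfl : j = i' := eq_of_blockMove_eq v (hc.symm.trans hc') hy
    obtain rfl : y = y' := (blockMove_inj v).1 (hc.symm.trans hc')
    refine ⟨j, x, y, z', hx, hy, hz', ?_, ?_, hyz', hb, hc, hd'⟩
    · rintro rfl
      exact hbc.ne (hb.trans hc.symm)
    · rintro rfl
      exact hbd (hb.trans hd'.symm)
  · exfalso
    have hbi : b.1 i = x := by rw [hb, blockMove_fst_self]
    have hbj : b.1 j = v.1 j := by rw [hb, blockMove_fst_of_ne v x hij]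
    by_cases hkj : k = j
    · subst hkj
      rw [hc, blockMove_blockMove] at hd
      have hzb : z ≠ b.1 k := fun h => hbd (by rw [hd, (blockMove_eq_self b).2 h])
      obtain ⟨i', x', z', hx', hz', hxz', hb', hd'⟩ :=
        eq_blockMove_of_mem_rootedTriangles (v := v) (b := b) (c := d)
          ⟨hvb, ⟨k, z, hzb, hd⟩, hdv⟩
      obtain rfl : i = i' := eq_of_blockMove_eq v (hb.symm.trans hb') hx
      have : d = blockMove i b z' := by rw [hb, blockMove_blockMove, hd']
      exact hij (eq_of_blockMove_eq b (hd.symm.trans this) hzb)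
    by_cases hmk : m = k
    · subst hmk
      rw [hd, blockMove_blockMove] at hv
      have hwc : w ≠ c.1 m := fun h => hvc (by rw [hv, (blockMove_eq_self c).2 h])
      obtain ⟨i', x', z', hx', hz', hxz', hb', hc'⟩ :=
        eq_blockMove_of_mem_rootedTriangles (v := v) (b := b) (c := c)
          ⟨hvb, hbc, ⟨m, w, hwc, hv⟩⟩
      obtain rfl : i = i' := eq_of_blockMove_eq v (hb.symm.trans hb') hx
      have : c = blockMove i b z' := by rw [hb, blockMove_blockMove, hc']
      exact hij (eq_of_blockMove_eq b (hc.symm.trans this) hy)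
    by_cases hmi : m = i
    · subst hmi
      have hd' : d = blockMove m b (d.1 m) := by
        rw [hb, blockMove_blockMove, hv, blockMove_blockMove, blockMove_self]
      have hdb : d.1 m ≠ b.1 m := fun h => hbd (by rw [hd', (blockMove_eq_self b).2 h])
      have hdb' : (blockGraph α).Adj b d := ⟨m, _, hdb, hd'⟩
      obtain ⟨i', y', z', hy', hz', hyz', hc', hd''⟩ :=
        eq_blockMove_of_mem_rootedTriangles (v := b) (b := c) (c := d) ⟨hbc, hcd, hdb'.symm⟩
      obtain rfl : j = i' := eq_of_blockMove_eq b (hc.symm.trans hc') hy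
      exact hij (eq_of_blockMove_eq b (hd'.symm.trans hd'') hdb).symm
    have hki : k = i := by
      by_contra hki
      apply hx
      rw [← hbi, hv, blockMove_fst_of_ne d w (Ne.symm hmi), hd,
        blockMove_fst_of_ne c z (Ne.symm hki), hc, blockMove_fst_of_ne b y (Ne.symm hij)]
    have hmj : m = j := by
      by_contra hmj
      apply hy
      rw [hbj, hv, blockMove_fst_of_ne d w (Ne.symm hmj), hd,
        blockMove_fst_of_ne c z (Ne.symm hkj), hc, blockMove_fst_self]
    subst hki hmj
    rw [hbj] at hy
    rw [hb] at hc
    rw [hc] at hd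
    rw [hd] at hv
    exact blockMove_square_ne (Ne.symm hij) hx hy hv.symm

variable [Fintype ι] [∀ i, Fintype (α i)]

theorem natCard_ne {β : Type*} [Fintype β] (a : β) :
    Nat.card {x : β // x ≠ a} = Fintype.card β - 1 := by
  classical
  simp [Nat.card_eq_fintype_card]

theorem natCard_embedding_ne {β : Type*} [Fintype β] (a : β) (k : ℕ) :
    Nat.card (Fin k ↪ {x : β // x ≠ a}) = (Fintype.card β - 1).descFactorial k := by
  classical
  rw [Nat.card_eq_fintype_card, Fintype.card_embedding_eq, Fintype.card_fin, ← natCard_ne a,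
    Nat.card_eq_fintype_card]

theorem card_neighborSet_blockGraph :
    Nat.card ((blockGraph α).neighborSet v) = ∑ i, (Fintype.card (α i) - 1) := by
  classical
  have h : Nat.card (Σ i, {x : α i // x ≠ v.1 i}) = ∑ i, (Fintype.card (α i) - 1) := by
    simp_rw [Nat.card_sigma, natCard_ne]
  rw [← h]
  symm
  refine Nat.card_eq_of_bijective
    (fun p => ⟨blockMove p.1 v p.2.1, blockGraph_adj_blockMove v p.2.2⟩) ⟨?_, ?_⟩
  · rintro ⟨i, x, hx⟩ ⟨j, y, hy⟩ h
    have h : blockMove i v x = blockMove j v y := congrArg Subtype.val h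
    obtain rfl := eq_of_blockMove_eq v h hx
    obtain rfl := (blockMove_inj v).1 h
    rfl
  · rintro ⟨_, i, x, hx, rfl⟩
    exact ⟨⟨i, x, hx⟩, rfl⟩

theorem card_rootedTriangles_blockGraph :
    Nat.card (rootedTriangles (blockGraph α) v) =
      ∑ i, (Fintype.card (α i) - 1).descFactorial 2 := by
  classical
  have h : Nat.card (Σ i, (Fin 2 ↪ {x : α i // x ≠ v.1 i})) =
      ∑ i, (Fintype.card (α i) - 1).descFactorial 2 := by
    simp_rw [Nat.card_sigma, natCard_embedding_ne]
  rw [← h]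
  symm
  refine Nat.card_eq_of_bijective
    (fun p => ⟨(blockMove p.1 v (p.2 0).1, blockMove p.1 v (p.2 1).1),
      blockGraph_adj_blockMove v (p.2 0).2,
      blockGraph_adj_blockMove_blockMove v fun h => by simpa using p.2.injective (Subtype.ext h),
      (blockGraph_adj_blockMove v (p.2 1).2).symm⟩) ⟨?_, ?_⟩
  · rintro ⟨i, e⟩ ⟨j, f⟩ h
    have h := congrArg Subtype.val h
    have h0 := congrArg Prod.fst h
    have h1 := congrArg Prod.snd h
    dsimp only at h0 h1
    obtain rfl := eq_of_blockMove_eq v h0 (e 0).2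
    rw [blockMove_inj] at h0 h1
    congr 1
    ext k
    fin_cases k
    exacts [h0, h1]
  · rintro ⟨⟨b, c⟩, h⟩
    obtain ⟨i, x, y, hx, hy, hxy, rfl, rfl⟩ := eq_blockMove_of_mem_rootedTriangles h
    refine ⟨⟨i, ⟨![⟨x, hx⟩, ⟨y, hy⟩], ?_⟩⟩, rfl⟩
    intro k l hkl
    fin_cases k <;> fin_cases l <;> simp_all [eq_comm]

theorem card_rootedQuads_blockGraph :
    Nat.card (rootedQuads (blockGraph α) v) =
      ∑ i, (Fintype.card (α i) - 1).descFactorial 3 := by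
  classical
  have h : Nat.card (Σ i, (Fin 3 ↪ {x : α i // x ≠ v.1 i})) =
      ∑ i, (Fintype.card (α i) - 1).descFactorial 3 := by
    simp_rw [Nat.card_sigma, natCard_embedding_ne]
  rw [← h]
  symm
  refine Nat.card_eq_of_bijective
    (fun p => ⟨(blockMove p.1 v (p.2 0).1, blockMove p.1 v (p.2 1).1, blockMove p.1 v (p.2 2).1),
      blockGraph_adj_blockMove v (p.2 0).2,
      blockGraph_adj_blockMove_blockMove v fun h => by simpa using p.2.injective (Subtype.ext h),
      blockGraph_adj_blockMove_blockMove v fun h => by simpa using p.2.injective (Subtype.ext h),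
      (blockGraph_adj_blockMove v (p.2 2).2).symm,
      (blockGraph_adj_blockMove v (p.2 1).2).ne,
      (blockGraph_adj_blockMove_blockMove v fun h => by
        simpa using p.2.injective (Subtype.ext h)).ne⟩) ⟨?_, ?_⟩
  · rintro ⟨i, e⟩ ⟨j, f⟩ h
    have h := congrArg Subtype.val h
    have h0 := congrArg (fun p => p.1) h
    have h1 := congrArg (fun p => p.2.1) h
    have h2 := congrArg (fun p => p.2.2) h
    dsimp only at h0 h1 h2
    obtain rfl := eq_of_blockMove_eq v h0 (e 0).2
    rw [blockMove_inj] at h0 h1 h2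
    congr 1
    ext k
    fin_cases k
    exacts [h0, h1, h2]
  · rintro ⟨⟨b, c, d⟩, h⟩
    obtain ⟨i, x, y, z, hx, hy, hz, hxy, hxz, hyz, rfl, rfl, rfl⟩ :=
      eq_blockMove_of_mem_rootedQuads h
    refine ⟨⟨i, ⟨![⟨x, hx⟩, ⟨y, hy⟩, ⟨z, hz⟩], ?_⟩⟩, rfl⟩
    intro k l hkl
    fin_cases k <;> fin_cases l <;> simp_all [eq_comm]

theorem hasLocalCounts_blockGraph :
    HasLocalCounts (blockGraph α) (∑ i, (Fintype.card (α i) - 1))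
      (∑ i, (Fintype.card (α i) - 1).descFactorial 2)
      (∑ i, (Fintype.card (α i) - 1).descFactorial 3) :=
  ⟨fun _ => card_neighborSet_blockGraph, fun _ => card_rootedTriangles_blockGraph,
    fun _ => card_rootedQuads_blockGraph⟩

end blockGraph

/-- The complete bipartite graph with both sides of size `r`. -/
def balancedBipartite (r : ℕ) : SimpleGraph (Bool × Fin r) where
  Adj v w := v.1 ≠ w.1
  symm := ⟨fun _ _ h => h.symm⟩
  loopless := ⟨fun _ h => h rfl⟩

theorem hasLocalCounts_balancedBipartite (r : ℕ) :
    HasLocalCounts (balancedBipartite r) r 0 (r * (r - 1) ^ 2) := by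
  refine ⟨?_, ?_, ?_⟩
  · rintro ⟨s, a⟩
    conv_rhs => rw [← Nat.card_fin r]
    symm
    refine Nat.card_eq_of_bijective (fun b : Fin r => ⟨(!s, b), ?_⟩) ⟨?_, ?_⟩
    · simp [balancedBipartite]
    · intro b b' h
      exact congrArg (fun p => p.1.2) h
    · rintro ⟨⟨t, b⟩, h⟩
      have h : s ≠ t := h
      exact ⟨b, by simp [Bool.eq_not_of_ne h]⟩
  · rintro ⟨s, a⟩
    have : IsEmpty (rootedTriangles (balancedBipartite r) (s, a)) := by
      refine ⟨?_⟩
      rintro ⟨⟨⟨t, b⟩, ⟨u, c⟩⟩, h1, h2, h3⟩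
      simp only [balancedBipartite] at h1 h2 h3
      revert s t u
      decide
    exact Nat.card_of_isEmpty
  · rintro ⟨s, a⟩
    have h : Nat.card ({c : Fin r // c ≠ a} × (Fin 2 ↪ Fin r)) = r * (r - 1) ^ 2 := by
      rw [Nat.card_prod, Nat.card_eq_fintype_card, Nat.card_eq_fintype_card,
        Fintype.card_embedding_eq, Fintype.card_subtype_compl]
      simp [Nat.descFactorial]
      ring
    rw [← h]
    symm
    refine Nat.card_eq_of_bijective
      (fun p => ⟨((!s, p.2 0), (s, p.1.1), (!s, p.2 1)), ?_⟩) ⟨?_, ?_⟩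
    · simp [rootedQuads, balancedBipartite, p.1.2.symm]
    · rintro ⟨⟨c, hc⟩, e⟩ ⟨⟨c', hc'⟩, e'⟩ h
      have h0 : e 0 = e' 0 := congrArg (fun p => p.1.1.2) h
      have h1 : e 1 = e' 1 := congrArg (fun p => p.1.2.2.2) h
      obtain rfl : c = c' := congrArg (fun p => p.1.2.1.2) h
      congr 1
      ext k
      fin_cases k
      · simp [h0]
      · simp [h1]
    · rintro ⟨⟨⟨t, b⟩, ⟨u, c⟩, ⟨w, d⟩⟩, h1, h2, h3, h4, h5, h6⟩
      have h1 : s ≠ t := h1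
      have h2 : t ≠ u := h2
      have h4 : w ≠ s := h4
      obtain rfl : s = u := by
        rw [Bool.eq_not_of_ne h1, Bool.eq_not_of_ne h2.symm]
      obtain rfl : t = !s := (Bool.eq_not_of_ne h1.symm)
      obtain rfl : w = !s := (Bool.eq_not_of_ne h4)
      refine ⟨⟨⟨c, fun h => h5 (by simp [h])⟩, ⟨![b, d], ?_⟩⟩, rfl⟩
      have hbd : b ≠ d := fun h => h6 (by simp [h])
      intro k l hkl
      fin_cases k <;> fin_cases l <;> simp_all [eq_comm]

theorem sum_range_add_div (r : ℕ) {l : ℕ} (hl : 0 < l) :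
    ∑ i ∈ Finset.range l, (r + i) / l = r := by
  induction r with
  | zero =>
    refine Finset.sum_eq_zero fun i hi => ?_
    rw [zero_add]
    exact Nat.div_eq_of_lt (Finset.mem_range.1 hi)
  | succ r ih =>
    have h1 := Finset.sum_range_succ (fun i => (r + i) / l) l
    rw [Finset.sum_range_succ', Nat.add_div_right r hl, ih] at h1
    simp only [add_zero] at h1
    have h2 : ∀ i, (r + 1 + i) / l = (r + (i + 1)) / l := fun i => by
      rw [add_assoc, add_comm 1 i]
    simp only [h2]
    omega

theorem exists_hasLocalCounts_of_mem_extremeSet {r : ℕ} (hr : 0 < r) {p : ℝ × ℝ}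
    (hp : p ∈ extremeSet r) :
    ∃ (V : Type) (G : SimpleGraph V) (s t : ℕ), Finite V ∧ Nonempty V ∧
      HasLocalCounts G r s t ∧ p = ((s : ℝ) / 6, (t : ℝ) / 8) := by
  rcases hp with rfl | ⟨l, hl, hlr, rfl⟩
  · refine ⟨_, balancedBipartite r, _, _, inferInstance, ⟨(true, ⟨0, hr⟩)⟩,
      hasLocalCounts_balancedBipartite r, ?_⟩
    rw [Nat.cast_mul, Nat.cast_pow, Nat.cast_pred hr]
    simp
  · have h := hasLocalCounts_blockGraph (α := fun i : Fin l => Fin ((r + i) / l + 1))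
    simp only [Fintype.card_fin, Nat.add_sub_cancel] at h
    rw [Fin.sum_univ_eq_sum_range (fun i => (r + i) / l), sum_range_add_div r hl] at h
    refine ⟨_, _, _, _, inferInstance, inferInstance, h, ?_⟩
    rw [Fin.sum_univ_eq_sum_range (fun i => ((r + i) / l).descFactorial 2),
      Fin.sum_univ_eq_sum_range (fun i => ((r + i) / l).descFactorial 3)]
    ext
    · simp only [extremePoint]
      rw [Nat.cast_sum, Finset.mul_sum, Finset.sum_div]
      refine Finset.sum_congr rfl fun i _ => ?_
      rw [Nat.descFactorial_eq_factorial_mul_choose]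
      push_cast [Nat.factorial]
      ring
    · simp only [extremePoint]
      rw [Nat.cast_sum, Finset.mul_sum, Finset.sum_div]
      refine Finset.sum_congr rfl fun i _ => ?_
      have hpos : 0 < (r + i) / l := Nat.div_pos (by omega) hl
      obtain ⟨n, hn⟩ := Nat.exists_eq_succ_of_ne_zero hpos.ne'
      rw [hn, Nat.succ_descFactorial_succ, Nat.descFactorial_eq_factorial_mul_choose]
      push_cast [Nat.factorial]
      ring

/-- Every point of `Q^r` with rational coordinates is realized as `(d₃(G), d₄(G))` for some
nonempty finite simple `r`-regular graph `G`. -/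
theorem exists_regular_graph_of_rat_mem_hull (r : ℕ) (hr : 3 ≤ r) (x y : ℝ)
    (hx : ∃ qx : ℚ, (qx : ℝ) = x) (hy : ∃ qy : ℚ, (qy : ℝ) = y)
    (hxy : (x, y) ∈ convexHull ℝ (extremeSet r)) :
    ∃ (V : Type) (G : SimpleGraph V), Finite V ∧ Nonempty V ∧ IsRegularGraph G r ∧
      cycleDensity G 3 = x ∧ cycleDensity G 4 = y := by
  obtain ⟨a, rfl⟩ := hx
  obtain ⟨b, rfl⟩ := hy
  obtain ⟨ι, _, z, w, hz, hind, hw0, hw1, hw⟩ := eq_pos_convex_span_of_mem_convexHull hxy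
  have h i := exists_hasLocalCounts_of_mem_extremeSet (by omega) (hz (Set.mem_range_self i))
  choose V G s t hfin hne hG hzst using h
  obtain ⟨q, hq⟩ := exists_rat_weights hind hw1 (fun i => (s i : ℚ) / 6) (fun i => (t i : ℚ) / 8)
    (fun i => by rw [hzst]; push_cast; rfl) a b hw
  obtain ⟨W, H, hW, hW', hreg, h3, h4⟩ := exists_regular_graph_of_rat_weights G r s t hG q
    (fun i => by exact_mod_cast (hq i ▸ hw0 i).le) (by simp only [hq] at hw1; exact_mod_cast hw1)
  refine ⟨W, H, hW, hW', hreg, h3.trans ?_, h4.trans ?_⟩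
  · simpa [hzst, hq, Prod.fst_sum] using congrArg Prod.fst hw
  · simpa [hzst, hq, Prod.snd_sum] using congrArg Prod.snd hw
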